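/- Let u be a word over Γ, let q be a Gaussian integer, and let d ∈ {1+i, 1−i, −1+i, −1−i}. Then the final position q' of the half-step turtle run of u from the state (q, d) is a Gaussian integer, and (Re q' + Im q') − (Re q + Im q) is congruent modulo 2 to the number of letters of u belonging to {L, R}. In particular, the parity of the current square changes exactly at the turn letters and is unchanged at the letters s and v. -/

import Mathlib

/-!
Write the direction as `d = m + n·i`. The argument works for any odd integers `m`, `n`, and this
class of directions is stable under multiplication by the four turn factors. The displacement
`d/2 + ρ(x)·d/2` of a single letter is then a Gaussian integer: it is `0` for `v`, `d` for `s`, and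
`((m ∓ n) + (n ± m)·i)/2` for `L` and `R` (upper signs for `L`). The sum of its coordinates is
respectively `0`, `m + n` (even), `m` and `n` (odd), so the parity of the square changes exactly at
the turn letters (`turtleStepH_parity`). Induction on the word gives the claim.
-/

open Complex

/-- The boundary alphabet Γ = {L, R, s, v}. -/
inductive GammaLetter : Type
  | L | R | s | v
deriving DecidableEq

/-- The turn factor: ρ(L) = i, ρ(R) = -i, ρ(s) = 1, ρ(v) = -1. -/
noncomputable def rho : GammaLetter → ℂ
  | .L => I
  | .R => -I
  | .s => 1
  | .v => -1

/-- One turtle step: the letter x updates (p, d) by first d ↦ ρ(x)·d and then p ↦ p + d. -/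
noncomputable def turtleStep (x : GammaLetter) (st : ℂ × ℂ) : ℂ × ℂ :=
  (st.1 + rho x * st.2, rho x * st.2)

/-- The turtle run of a word from a state, processing letters left to right. -/
noncomputable def run (w : List GammaLetter) (st : ℂ × ℂ) : ℂ × ℂ :=
  w.foldl (fun st x => turtleStep x st) st

/-- The reduction table: RvR ↦ s, LvL ↦ s, RvL ↦ v, LvR ↦ v, svR ↦ L, svL ↦ R,
Rvs ↦ L, Lvs ↦ R, svs ↦ v.  (`Red X Y` is the value on the triple X v Y.) -/
def Red : GammaLetter → GammaLetter → GammaLetter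
  | .R, .R => .s
  | .L, .L => .s
  | .R, .L => .v
  | .L, .R => .v
  | .s, .R => .L
  | .s, .L => .R
  | .R, .s => .L
  | .L, .s => .R
  | .s, .s => .v
  | _, _ => .v

/-- One half-step turtle step: the letter x updates (p, d) by
p ↦ p + d/2 + ρ(x)·d/2 and d ↦ ρ(x)·d. -/
noncomputable def turtleStepH (x : GammaLetter) (st : ℂ × ℂ) : ℂ × ℂ :=
  (st.1 + st.2 / 2 + rho x * st.2 / 2, rho x * st.2)

/-- The half-step turtle run of a word from a state, processing letters left to right. -/
noncomputable def runH (w : List GammaLetter) (st : ℂ × ℂ) : ℂ × ℂ :=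
  w.foldl (fun st x => turtleStepH x st) st

/-- Whether a letter of Γ is a turn letter (L or R). -/
def isTurn : GammaLetter → Bool
  | .L => true
  | .R => true
  | _ => false

/-- The parity statement for a single letter, with `d = (2j+1) + (2k+1)·i` an arbitrary direction
with odd coordinates. The new direction has odd coordinates again, so the step can be iterated. -/
lemma turtleStepH_parity (x : GammaLetter) (a b j k : ℤ) :
    ∃ a' b' j' k' : ℤ,
      turtleStepH x ((a : ℂ) + (b : ℂ) * I, (2 * j + 1 : ℂ) + (2 * k + 1) * I) =
        ((a' : ℂ) + (b' : ℂ) * I, (2 * j' + 1 : ℂ) + (2 * k' + 1) * I) ∧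
      (a' + b') - (a + b) ≡ (if isTurn x then 1 else 0) [ZMOD 2] := by
  cases x
  · refine ⟨a + (j - k), b + (j + k + 1), -k - 1, j, ?_, ?_⟩
    · ext1 <;> simp only [turtleStepH, rho] <;> push_cast <;> ring_nf <;> simp only [I_sq] <;> ring
    · simp only [isTurn, Int.ModEq, if_true]; omega
  · refine ⟨a + (j + k + 1), b + (k - j), k, -j - 1, ?_, ?_⟩
    · ext1 <;> simp only [turtleStepH, rho] <;> push_cast <;> ring_nf <;> simp only [I_sq] <;> ring
    · simp only [isTurn, Int.ModEq, if_true]; omega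
  · refine ⟨a + (2 * j + 1), b + (2 * k + 1), j, k, ?_, ?_⟩
    · ext1 <;> simp only [turtleStepH, rho] <;> push_cast <;> ring
    · simp only [isTurn, Int.ModEq, Bool.false_eq_true, if_false]; omega
  · refine ⟨a, b, -j - 1, -k - 1, ?_, ?_⟩
    · ext1 <;> simp only [turtleStepH, rho] <;> push_cast <;> ring
    · simp only [isTurn, Int.ModEq, Bool.false_eq_true, if_false]; omega

/-- The parity statement for words, for every direction with odd coordinates. -/
lemma runH_parity_of_odd (u : List GammaLetter) (a b j k : ℤ) :
    ∃ a' b' : ℤ,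
      (runH u ((a : ℂ) + (b : ℂ) * I, (2 * j + 1 : ℂ) + (2 * k + 1) * I)).1 =
        (a' : ℂ) + (b' : ℂ) * I ∧
      (a' + b') - (a + b) ≡ (u.countP isTurn : ℤ) [ZMOD 2] := by
  induction u generalizing a b j k with
  | nil => exact ⟨a, b, rfl, by simp⟩
  | cons x u ih =>
    obtain ⟨a₁, b₁, j₁, k₁, hstep, hpar⟩ := turtleStepH_parity x a b j k
    obtain ⟨a', b', hrun, hpar'⟩ := ih a₁ b₁ j₁ k₁
    refine ⟨a', b', ?_, ?_⟩
    · rw [← hrun, ← hstep]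
      rfl
    · rw [List.countP_cons]
      push_cast
      convert hpar'.add hpar using 1
      ring

/-- Starting at a Gaussian-integer square q = a + b·i with diagonal direction d, the
final position of the half-step run of u is a Gaussian integer a' + b'·i, and
(a' + b') − (a + b) is congruent mod 2 to the number of turn letters (L or R) of u. -/
theorem runH_parity (u : List GammaLetter) (a b : ℤ) (d : ℂ)
    (hd : d = 1 + I ∨ d = 1 - I ∨ d = -1 + I ∨ d = -1 - I) :
    ∃ a' b' : ℤ, (runH u ((a : ℂ) + (b : ℂ) * I, d)).1 = (a' : ℂ) + (b' : ℂ) * I ∧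
      (a' + b') - (a + b) ≡ (u.countP isTurn : ℤ) [ZMOD 2] := by
  obtain ⟨j, k, rfl⟩ : ∃ j k : ℤ, d = (2 * j + 1 : ℂ) + (2 * k + 1) * I := by
    rcases hd with rfl | rfl | rfl | rfl
    · exact ⟨0, 0, by push_cast; ring⟩
    · exact ⟨0, -1, by push_cast; ring⟩
    · exact ⟨-1, 0, by push_cast; ring⟩
    · exact ⟨-1, -1, by push_cast; ring⟩
  exact runH_parity_of_odd u a b j k
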